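/- Fix a positive integer N₀ divisible by 8, an integer a with a ≡ 1 (mod 4) and gcd(a, N₀) = 1, a sign κ ∈ {1, −1}, a real number ε with 0 < ε < 1/2, and a smooth function Φ : ℝ → ℝ with Φ ≥ 0, compactly supported in [1/2, 5/2]. Then there exists a constant C > 0 (depending only on N₀, ε, and Φ) with the following property. For every real X ≥ 2 and all positive integers n and v with gcd(nv, N₀) = 1, v squarefree, gcd(n, v) = 1, v·√n ≤ X^{1/2 − ε}, and n NOT a perfect square, one has | ∑_{d} (d|n)·Φ(κd/X) | ≤ C·X^{1/2 + ε}·√n, where the sum runs over all squarefree integers d with κd > 0, d ≡ a (mod N₀), and v | d. -/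

import Mathlib

open scoped Classical

namespace PV
open Finset

/-- lower bound for the distance of a nontrivial additive character value from one -/
lemma two_div_norm_le (k : ℕ) [NeZero k] (s : ℕ) (hs : 0 < s) (hsk : s < k) :
    2 / ‖(ZMod.stdAddChar ((s : ℕ) : ZMod k) : ℂ) - 1‖ ≤
      (k / 2 : ℝ) * (1 / (s : ℝ) + 1 / ((k - s : ℕ) : ℝ)) := by
  have hk : (0 : ℝ) < k := by exact_mod_cast (hs.trans hsk)
  have hs' : (0 : ℝ) < s := by exact_mod_cast hs
  have hsk' : (s : ℝ) < k := by exact_mod_cast hsk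
  have hpi := Real.pi_pos
  rw [Nat.cast_sub hsk.le]
  have hn : ‖(ZMod.stdAddChar ((s : ℕ) : ZMod k) : ℂ) - 1‖ = 2 * |Real.sin (Real.pi * s / k)| := by
    have h1 := ZMod.stdAddChar_coe (N := k) (s : ℤ)
    have h2 := Complex.norm_exp_I_mul_ofReal_sub_one (2 * Real.pi * s / k)
    have h3 : Complex.I * ((2 * Real.pi * s / k : ℝ) : ℂ) =
        2 * Real.pi * Complex.I * ((s : ℤ) : ℂ) / k := by
      push_cast; ring
    rw [h3, ← h1] at h2
    rw [Int.cast_natCast] at h2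
    rw [h2, Real.norm_eq_abs, abs_mul, abs_two]
    congr 3
    ring
  rw [hn]
  have key : ∀ t : ℝ, 0 < t → 2 * t / k ≤ |Real.sin (Real.pi * s / k)| →
      2 / (2 * |Real.sin (Real.pi * s / k)|) ≤ k / 2 * (1 / t) := by
    intro t ht h
    have h0 : 0 < 2 * t / k := by positivity
    calc 2 / (2 * |Real.sin (Real.pi * s / k)|) ≤ 2 / (2 * (2 * t / k)) := by gcongr
      _ = k / 2 * (1 / t) := by field_simp
  have hks : (0 : ℝ) < k - s := by linarith
  rcases le_total (s : ℝ) (k - s) with h | h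
  · refine (key s hs' ?_).trans ?_
    · refine le_trans ?_ (le_abs_self _)
      have := Real.mul_le_sin (x := Real.pi * s / k) (by positivity) (by
        rw [div_le_iff₀ hk]; nlinarith)
      refine le_trans (le_of_eq ?_) this
      field_simp
    · gcongr
      have : 0 ≤ 1 / ((k : ℝ) - s) := by positivity
      linarith
  · refine (key (k - s) hks ?_).trans ?_
    · refine le_trans ?_ (le_abs_self _)
      have := Real.mul_le_sin (x := Real.pi * (k - s) / k) (by positivity) (by
        rw [div_le_iff₀ hk]; nlinarith)
      have h4 : Real.pi * (k - s) / k = Real.pi - Real.pi * s / k := by field_simp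
      rw [h4, Real.sin_pi_sub, ← h4] at this
      refine le_trans (le_of_eq ?_) this
      field_simp
    · gcongr
      have : 0 ≤ 1 / (s : ℝ) := by positivity
      linarith

lemma geom_bound (k : ℕ) [NeZero k] (K s : ℕ) (hs : 0 < s) (hsk : s < k) :
    ‖∑ j ∈ range K, (ZMod.stdAddChar ((s : ℕ) : ZMod k) : ℂ) ^ j‖ ≤
      (k / 2 : ℝ) * (1 / (s : ℝ) + 1 / ((k - s : ℕ) : ℝ)) := by
  refine le_trans ?_ (two_div_norm_le k s hs hsk)
  set z : ℂ := ZMod.stdAddChar ((s : ℕ) : ZMod k) with hz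
  have hz1 : ‖z‖ = 1 := by rw [hz, ZMod.stdAddChar_apply]; exact Circle.norm_coe _
  have hne : z ≠ 1 := by
    intro h
    have h2 : (ZMod.stdAddChar ((s : ℕ) : ZMod k) : ℂ) = ZMod.stdAddChar (0 : ZMod k) := by
      rw [AddChar.map_zero_eq_one]; exact h
    have h3 := ZMod.injective_stdAddChar h2
    rw [ZMod.natCast_eq_zero_iff] at h3
    exact absurd (Nat.le_of_dvd hs h3) (by omega)
  have hpos : 0 < ‖z - 1‖ := norm_pos_iff.mpr (sub_ne_zero.mpr hne)
  rw [le_div_iff₀ hpos, ← norm_mul, geom_sum_mul]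
  refine (norm_sub_le _ _).trans ?_
  rw [norm_pow, hz1]; norm_num

lemma sum_recip (k : ℕ) (hk : 1 < k) :
    ∑ s ∈ Ico 1 k, ((k / 2 : ℝ) * (1 / (s : ℝ) + 1 / ((k - s : ℕ) : ℝ))) ≤
      k * (1 + Real.log k) := by
  have h1 : ∑ s ∈ Ico 1 k, (1 / ((k - s : ℕ) : ℝ)) = ∑ s ∈ Ico 1 k, (1 / (s : ℝ)) := by
    have := Finset.sum_Ico_reflect (fun s : ℕ => 1 / (s : ℝ)) 1 (m := k) (n := k) (by omega)
    rw [this]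
    congr 2
    omega
  rw [← mul_sum, sum_add_distrib, h1]
  have h2 : ∑ s ∈ Ico 1 k, (1 / (s : ℝ)) ≤ 1 + Real.log k := by
    have h3 := harmonic_le_one_add_log k
    rw [harmonic_eq_sum_Icc] at h3
    push_cast at h3
    refine le_trans ?_ h3
    simp only [one_div]
    apply sum_le_sum_of_subset_of_nonneg
    · intro x hx; simp at hx ⊢; omega
    · intros; positivity
  have : (0 : ℝ) ≤ k := by positivity
  nlinarith

lemma norm_gaussSum {k : ℕ} [NeZero k] (χ : DirichletCharacter ℂ k) (hχ : χ.IsPrimitive)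
    (hinv : χ⁻¹ = χ) : ‖gaussSum χ ZMod.stdAddChar‖ ^ 2 = k := by
  have h1 : ZMod.dft χ = fun t => gaussSum χ ZMod.stdAddChar * χ (-t) := by
    funext t
    rw [hχ.fourierTransform_eq_inv_mul_gaussSum, hinv, mul_comm]
  have h2 := ZMod.dft_dft (χ : ZMod k → ℂ)
  rw [h1, ZMod.dft_const_mul] at h2
  have h3 := congrFun h2 (-1)
  have h4 := ZMod.dft_comp_neg (χ : ZMod k → ℂ)
  rw [h4] at h3
  simp only [h1, neg_neg, map_one, smul_eq_mul, mul_one] at h3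
  have : ‖gaussSum χ ZMod.stdAddChar‖ ^ 2 * ‖χ (-1)‖ = k := by
    rw [sq, ← norm_mul, ← norm_mul, mul_assoc, h3]; simp
  have h5 : ‖χ (-1)‖ = 1 := by
    simpa using DirichletCharacter.unit_norm_eq_one χ (-1 : (ZMod k)ˣ)
  rwa [h5, mul_one] at this

theorem polya_vinogradov {k : ℕ} [NeZero k] (hk : 1 < k) (χ : DirichletCharacter ℂ k)
    (hχ : χ.IsPrimitive) (hinv : χ⁻¹ = χ) (β : ZMod k) (K : ℕ) :
    ‖∑ j ∈ range K, χ (β + j)‖ ≤ Real.sqrt k * (1 + Real.log k) := by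
  have hk0 : (0 : ℝ) < k := by positivity
  set τ := gaussSum χ ZMod.stdAddChar with hτ
  have hτn : ‖τ‖ = Real.sqrt k := by
    rw [← norm_gaussSum χ hχ hinv, Real.sqrt_sq (norm_nonneg _)]
  have hF : ∀ x : ZMod k, χ x = (k : ℂ)⁻¹ * ∑ t : ZMod k, ZMod.stdAddChar (t * x) * (χ (-t) * τ) := by
    intro x
    have := ZMod.invDFT_apply (ZMod.dft χ) x
    rw [LinearEquiv.symm_apply_apply] at this
    rw [this, smul_eq_mul]
    congr 1
    refine sum_congr rfl fun t _ => ?_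
    rw [hχ.fourierTransform_eq_inv_mul_gaussSum, hinv, smul_eq_mul]
  have hsum : ∑ j ∈ range K, χ (β + j) = (k : ℂ)⁻¹ * ∑ t : ZMod k,
      (ZMod.stdAddChar (t * β) * (χ (-t) * τ)) * ∑ j ∈ range K, (ZMod.stdAddChar t) ^ j := by
    simp_rw [hF (β + _)]
    rw [← mul_sum, sum_comm]
    congr 1
    refine sum_congr rfl fun t _ => ?_
    rw [mul_sum]
    refine sum_congr rfl fun j _ => ?_
    have : t * (β + j) = t * β + j • t := by rw [nsmul_eq_mul]; ring
    rw [this, AddChar.map_add_eq_mul, AddChar.map_nsmul_eq_pow]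
    ring
  have hbound : ‖∑ t : ZMod k,
      (ZMod.stdAddChar (t * β) * (χ (-t) * τ)) * ∑ j ∈ range K, (ZMod.stdAddChar t) ^ j‖ ≤
      Real.sqrt k * (k * (1 + Real.log k)) := by
    have hre : ∀ f : ZMod k → ℂ, ∑ t : ZMod k, f t = ∑ s ∈ range k, f (s : ZMod k) := by
      intro f
      symm
      refine sum_nbij' (fun s => (s : ZMod k)) (fun t => t.val) ?_ ?_ ?_ ?_ ?_
      · simp
      · intro t _; simpa using ZMod.val_lt t
      · intro s hs; exact ZMod.val_cast_of_lt (by simpa using hs)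
      · intro t _; simp
      · simp
    rw [hre, range_eq_Ico, sum_eq_sum_Ico_succ_bot (by omega)]
    have h0 : χ (-((0 : ℕ) : ZMod k)) = 0 := by
      have : Fact (1 < k) := ⟨hk⟩
      apply MulChar.map_nonunit
      simp
    rw [h0]
    simp only [zero_mul, mul_zero, zero_add]
    refine (norm_sum_le _ _).trans ?_
    refine le_trans ?_ (mul_le_mul_of_nonneg_left (sum_recip k hk) (Real.sqrt_nonneg _))
    rw [mul_sum]
    refine sum_le_sum fun s hs => ?_
    simp only [mem_Ico] at hs
    rw [norm_mul, norm_mul, norm_mul, hτn]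
    have h1 : ‖(ZMod.stdAddChar ((s : ZMod k) * β) : ℂ)‖ = 1 := by
      rw [ZMod.stdAddChar_apply]; exact Circle.norm_coe _
    have h2 := χ.norm_le_one (-(s : ZMod k))
    rw [h1, one_mul]
    refine mul_le_mul ?_ (geom_bound k K s (by omega) hs.2) (norm_nonneg _) (Real.sqrt_nonneg _)
    have := Real.sqrt_nonneg k
    nlinarith
  rw [hsum, norm_mul, norm_inv, Complex.norm_natCast]
  calc (k : ℝ)⁻¹ * _ ≤ (k : ℝ)⁻¹ * (Real.sqrt k * (k * (1 + Real.log k))) := by gcongr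
    _ = _ := by field_simp

/-- The Jacobi symbol as a Dirichlet character. -/
noncomputable def jacChar (k : ℕ) [NeZero k] : DirichletCharacter ℂ k where
  toFun x := (jacobiSym (x.val : ℤ) k : ℂ)
  map_one' := by
    have : jacobiSym (((1 : ZMod k).val : ℕ) : ℤ) k = jacobiSym 1 k := by
      apply jacobiSym.mod_left'
      have := ZMod.val_one_eq_one_mod k
      rw [this]; simp
    rw [this]; simp
  map_mul' x y := by
    have : jacobiSym (((x * y).val : ℕ) : ℤ) k = jacobiSym ((x.val : ℤ) * y.val) k := by
      apply jacobiSym.mod_left'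
      rw [ZMod.val_mul]; simp
    rw [this, jacobiSym.mul_left]; push_cast; rfl
  map_nonunit' x hx := by
    have : jacobiSym (x.val : ℤ) k = 0 := by
      rw [jacobiSym.eq_zero_iff_not_coprime]
      intro h
      apply hx
      have h2 : Nat.Coprime x.val k := by rwa [Int.gcd_natCast_natCast] at h
      have := (ZMod.isUnit_iff_coprime x.val k).mpr h2
      simpa using this
    rw [this]; simp

lemma jacChar_intCast (k : ℕ) [NeZero k] (x : ℤ) :
    jacChar k (x : ZMod k) = (jacobiSym x k : ℂ) := by
  change ((jacobiSym (((x : ZMod k).val : ℕ) : ℤ) k : ℤ) : ℂ) = _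
  congr 1
  apply jacobiSym.mod_left'
  rw [ZMod.val_intCast]; simp

lemma jacChar_inv (k : ℕ) [NeZero k] : (jacChar k)⁻¹ = jacChar k := by
  rw [inv_eq_iff_mul_eq_one]
  ext u
  rw [MulChar.mul_apply, MulChar.one_apply_coe]
  change ((jacobiSym ((u : ZMod k).val : ℤ) k : ℤ) : ℂ) * ((jacobiSym ((u : ZMod k).val : ℤ) k : ℤ) : ℂ) = 1
  have h : Int.gcd ((u : ZMod k).val : ℤ) k = 1 := by
    rw [Int.gcd_natCast_natCast]
    exact ZMod.val_coe_unit_coprime u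
  have := jacobiSym.sq_one h
  rw [← sq]
  exact_mod_cast this

lemma jacChar_primitive (k : ℕ) [NeZero k] (hodd : Odd k) (hsq : Squarefree k) :
    (jacChar k).IsPrimitive := by
  rw [DirichletCharacter.isPrimitive_def]
  by_contra hne
  have hd := (jacChar k).conductor_dvd_level
  have hf := (jacChar k).factorsThrough_conductor
  rw [DirichletCharacter.factorsThrough_iff_ker_unitsMap hd] at hf
  generalize (jacChar k).conductor = d at *
  obtain ⟨e, he⟩ := hd
  have he1 : e ≠ 1 := by rintro rfl; simp at he; exact hne he.symm
  obtain ⟨p, hp, hpe⟩ := Nat.exists_prime_and_dvd he1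
  obtain ⟨f, rfl⟩ := hpe
  set r := d * f with hr
  have hkr : k = p * r := by rw [he, hr]; ring
  have hk0 : k ≠ 0 := NeZero.ne k
  have hr0 : r ≠ 0 := by intro h; rw [h, mul_zero] at hkr; exact hk0 hkr
  have hcop : Nat.Coprime p r := by
    rw [hkr] at hsq
    exact Nat.coprime_of_squarefree_mul hsq
  have : Fact p.Prime := ⟨hp⟩
  have hp2 : p ≠ 2 := by
    rintro rfl
    rw [hkr] at hodd
    exact (Nat.not_odd_iff_even.mpr (even_two_mul r)) hodd
  obtain ⟨z, hz⟩ := FiniteField.exists_nonsquare (F := ZMod p) (by rwa [ZMod.ringChar_zmod_n])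
  obtain ⟨x, hx1, hx2⟩ := Nat.chineseRemainder hcop z.val 1
  have hJp : jacobiSym (x : ℤ) p = -1 := by
    apply ZMod.nonsquare_iff_jacobiSym_eq_neg_one.mpr
    have : ((x : ℤ) : ZMod p) = z := by
      rw [Int.cast_natCast, (ZMod.natCast_eq_natCast_iff _ _ _).mpr hx1]; simp
    rwa [this]
  have hJr : jacobiSym (x : ℤ) r = 1 := by
    rw [← jacobiSym.one_left r]
    apply jacobiSym.mod_left'
    exact_mod_cast hx2
  have hJ : jacobiSym (x : ℤ) k = -1 := by
    rw [hkr, jacobiSym.mul_right' _ hp.ne_zero hr0, hJp, hJr]; norm_num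
  have hxk : Nat.Coprime x k := by
    by_contra h
    have : jacobiSym (x : ℤ) k = 0 := by
      rw [jacobiSym.eq_zero_iff_not_coprime]; simpa [Int.gcd_natCast_natCast] using h
    rw [this] at hJ; norm_num at hJ
  have hmem : ZMod.unitOfCoprime x hxk ∈ (MulChar.toUnitHom (jacChar k)).ker := by
    apply hf
    rw [MonoidHom.mem_ker]
    ext
    rw [ZMod.unitsMap_def, Units.coe_map, ZMod.coe_unitOfCoprime]
    simp only [MonoidHom.coe_coe, map_natCast, Units.val_one]
    have : x ≡ 1 [MOD d] := hx2.of_dvd ⟨f, hr⟩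
    simpa using (ZMod.natCast_eq_natCast_iff _ _ _).mpr this
  rw [MonoidHom.mem_ker] at hmem
  have h1 := congrArg Units.val hmem
  rw [MulChar.coe_toUnitHom, ZMod.coe_unitOfCoprime] at h1
  have h2 := jacChar_intCast k x
  rw [Int.cast_natCast, h1, hJ] at h2
  norm_num at h2

/-- Polya-Vinogradov for the Jacobi symbol along an arithmetic progression. -/
theorem pv_jacobi (k : ℕ) (hk : 1 < k) (hodd : Odd k) (hsq : Squarefree k) (q b K : ℕ)
    (hq : Nat.Coprime q k) :
    |∑ j ∈ range K, (jacobiSym ((b + q * j : ℕ) : ℤ) k : ℝ)| ≤ Real.sqrt k * (1 + Real.log k) := by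
  have : NeZero k := ⟨by omega⟩
  set u := ZMod.unitOfCoprime q hq
  have h := polya_vinogradov hk (jacChar k) (jacChar_primitive k hodd hsq) (jacChar_inv k)
    ((u⁻¹ : (ZMod k)ˣ) * (b : ZMod k)) K
  have h1 : ∀ j : ℕ, ((jacobiSym ((b + q * j : ℕ) : ℤ) k : ℝ) : ℂ) =
      jacChar k u * jacChar k ((u⁻¹ : (ZMod k)ˣ) * (b : ZMod k) + j) := by
    intro j
    rw [← map_mul, mul_add, ← mul_assoc, Units.mul_inv, one_mul]
    rw [Complex.ofReal_intCast, ← jacChar_intCast]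
    congr 1
    push_cast
    rw [ZMod.coe_unitOfCoprime]
  have h2 : ‖((∑ j ∈ range K, (jacobiSym ((b + q * j : ℕ) : ℤ) k : ℝ) : ℝ) : ℂ)‖ ≤
      Real.sqrt k * (1 + Real.log k) := by
    rw [Complex.ofReal_sum]
    simp_rw [h1]
    rw [← mul_sum, norm_mul, DirichletCharacter.unit_norm_eq_one, one_mul]
    exact h
  rwa [Complex.norm_real, Real.norm_eq_abs] at h2

end PV

namespace PV
open Finset

lemma supp_of_ne {Φ : ℝ → ℝ} (hΦ : Function.support Φ ⊆ Set.Icc (1 / 2) (5 / 2)) {x : ℝ}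
    (hx : Φ x ≠ 0) : 1 / 2 ≤ x ∧ x ≤ 5 / 2 := hΦ hx

lemma weighted {Φ : ℝ → ℝ} (hΦ : Function.support Φ ⊆ Set.Icc (1 / 2) (5 / 2))
    {L : NNReal} (hL : LipschitzWith L Φ)
    (k : ℕ) (hk : 1 < k) (hodd : Odd k) (hsq : Squarefree k) (q b : ℕ) (hq0 : 0 < q)
    (hq : Nat.Coprime q k) (y : ℝ) (hy : 0 < y) :
    |∑' j : ℕ, (jacobiSym ((b + q * j : ℕ) : ℤ) k : ℝ) * Φ (((b + q * j : ℕ) : ℝ) / y)| ≤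
      3 * L * (Real.sqrt k * (1 + Real.log k)) := by
  set B := Real.sqrt k * (1 + Real.log k) with hB
  have hB0 : 0 ≤ B := by
    have : 0 ≤ Real.log k := Real.log_natCast_nonneg k
    positivity
  set K := ⌈3 * y⌉₊ with hK
  set u : ℕ → ℝ := fun j => ((b + q * j : ℕ) : ℝ) / y with hu
  have hu0 : ∀ j, 0 ≤ u j := fun j => by positivity
  have humono : Monotone u := by
    intro i j hij
    simp only [hu]
    gcongr
  have hbig : ∀ j, K ≤ j → Φ (u j) = 0 := by
    intro j hj
    by_contra h
    have h1 := (supp_of_ne hΦ h).2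
    have h2 : 3 * y ≤ j := (Nat.le_ceil _).trans (by exact_mod_cast hj)
    have h3 : (j : ℝ) ≤ ((b + q * j : ℕ) : ℝ) := by
      have : j ≤ b + q * j := by nlinarith
      exact_mod_cast this
    have h4 : 3 ≤ u j := by
      simp only [hu]
      rw [le_div_iff₀ hy]; linarith
    linarith
  have hclamp : ∀ j, Φ (u j) = Φ (min (u j) 3) := by
    intro j
    rcases le_total (u j) 3 with h | h
    · rw [min_eq_left h]
    · rw [min_eq_right h]
      have z : ∀ x : ℝ, 3 ≤ x → Φ x = 0 := by
        intro x hx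
        by_contra h'
        linarith [(supp_of_ne hΦ h').2]
      rw [z _ h, z 3 le_rfl]
  rw [tsum_eq_sum (s := range (K + 1)) (by
    intro j hj
    have : Φ (((b + q * j : ℕ) : ℝ) / y) = 0 := hbig j (by simp at hj; omega)
    rw [this, mul_zero])]
  have hparts := Finset.sum_range_by_parts (fun j => Φ (u j))
    (fun j => (jacobiSym ((b + q * j : ℕ) : ℤ) k : ℝ)) (K + 1)
  simp only [smul_eq_mul, Nat.add_sub_cancel, hbig K le_rfl, zero_mul, zero_sub] at hparts
  have hcomm : ∑ j ∈ range (K + 1),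
      (jacobiSym ((b + q * j : ℕ) : ℤ) k : ℝ) * Φ (((b + q * j : ℕ) : ℝ) / y) =
      ∑ j ∈ range (K + 1), Φ (u j) * (jacobiSym ((b + q * j : ℕ) : ℤ) k : ℝ) :=
    sum_congr rfl fun j _ => mul_comm _ _
  rw [hcomm, hparts, abs_neg]
  refine (abs_sum_le_sum_abs _ _).trans ?_
  have hstep : ∀ i ∈ range K, |(Φ (u (i + 1)) - Φ (u i)) *
      ∑ j ∈ range (i + 1), (jacobiSym ((b + q * j : ℕ) : ℤ) k : ℝ)| ≤
      (L * B) * (min (u (i + 1)) 3 - min (u i) 3) := by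
    intro i _
    rw [abs_mul]
    have h1 := pv_jacobi k hk hodd hsq q b (i + 1) hq
    have h2 : |Φ (u (i + 1)) - Φ (u i)| ≤ L * (min (u (i + 1)) 3 - min (u i) 3) := by
      rw [hclamp (i + 1), hclamp i]
      have h3 := hL.dist_le_mul (min (u (i + 1)) 3) (min (u i) 3)
      rw [Real.dist_eq, Real.dist_eq] at h3
      have h4 : min (u i) 3 ≤ min (u (i + 1)) 3 :=
        min_le_min_right _ (humono (Nat.le_succ i))
      rwa [abs_of_nonneg (sub_nonneg.mpr h4)] at h3
    calc _ ≤ L * (min (u (i + 1)) 3 - min (u i) 3) * B := by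
          exact mul_le_mul h2 h1 (abs_nonneg _) ((abs_nonneg _).trans h2)
      _ = _ := by ring
  refine (sum_le_sum hstep).trans ?_
  rw [← mul_sum, Finset.sum_range_sub (fun i => min (u i) 3)]
  have h5 : min (u K) 3 - min (u 0) 3 ≤ 3 := by
    have : 0 ≤ min (u 0) 3 := le_min (hu0 0) (by norm_num)
    have := min_le_right (u K) 3
    linarith
  have : 0 ≤ (L : ℝ) * B := by positivity
  nlinarith

lemma fin_supp {Φ : ℝ → ℝ} (hΦ : Function.support Φ ⊆ Set.Icc (1 / 2) (5 / 2))
    {X : ℝ} (hX : 0 < X) {m : ℕ} (hm : Φ ((m : ℝ) / X) ≠ 0) : 0 < m ∧ (m : ℝ) ≤ 3 * X := by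
  obtain ⟨h1, h2⟩ := supp_of_ne hΦ hm
  rw [le_div_iff₀ hX] at h1
  rw [div_le_iff₀ hX] at h2
  constructor
  · have : (0 : ℝ) < m := by nlinarith
    exact_mod_cast this
  · nlinarith

lemma summ {Φ : ℝ → ℝ} (hΦ : Function.support Φ ⊆ Set.Icc (1 / 2) (5 / 2))
    {X : ℝ} (hX : 0 < X) (f : ℕ → ℝ) (hf : ∀ m : ℕ, Φ ((m : ℝ) / X) = 0 → f m = 0) :
    Summable f := by
  apply summable_of_ne_finset_zero (s := range (⌊3 * X⌋₊ + 1))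
  intro m hm
  apply hf
  by_contra h
  have := (fin_supp hΦ hX h).2
  have := Nat.le_floor this
  simp at hm; omega

lemma T_bound {Φ : ℝ → ℝ} (hΦ : Function.support Φ ⊆ Set.Icc (1 / 2) (5 / 2))
    {L : NNReal} (hL : LipschitzWith L Φ)
    (k : ℕ) (hk : 1 < k) (hodd : Odd k) (hsq : Squarefree k) (q : ℕ) (hq0 : 0 < q)
    (hq : Nat.Coprime q k) (X : ℝ) (hX : 0 < X) (M : ℕ) (hM : 0 < M) (a : ℤ) :
    |∑' m : ℕ, if (m : ℤ) ≡ a [ZMOD q] ∧ M ∣ m then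
      (jacobiSym (m : ℤ) k : ℝ) * Φ ((m : ℝ) / X) else 0| ≤
      q * (3 * L * (Real.sqrt k * (1 + Real.log k))) := by
  set F : ℕ → ℝ := fun m => if (m : ℤ) ≡ a [ZMOD q] ∧ M ∣ m then
      (jacobiSym (m : ℤ) k : ℝ) * Φ ((m : ℝ) / X) else 0 with hF
  set B := 3 * L * (Real.sqrt k * (1 + Real.log k)) with hB
  have hB0 : 0 ≤ B := by
    have : 0 ≤ Real.log k := Real.log_natCast_nonneg k
    positivity
  have hM' : (0 : ℝ) < M := by exact_mod_cast hM
  have hinj : Function.Injective (fun e : ℕ => M * e) := fun x y h => by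
    exact Nat.eq_of_mul_eq_mul_left hM h
  have h1 := hinj.tsum_eq (f := F) (by
    intro m hm
    rw [Function.mem_support] at hm
    by_contra h
    apply hm
    simp only [hF]
    rw [if_neg]
    rintro ⟨_, ⟨e, he⟩⟩
    exact h ⟨e, he.symm⟩)
  have hs : Summable (fun e : ℕ => F (M * e)) := by
    have : Summable F := summ hΦ hX F (fun m hm => by simp [hF, hm])
    exact this.comp_injective hinj
  have : NeZero q := ⟨hq0.ne'⟩
  rw [← h1, Nat.sumByResidueClasses hs q]
  refine (abs_sum_le_sum_abs _ _).trans ?_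
  have hc : (q : ℝ) * B = ∑ _b : ZMod q, B := by
    rw [sum_const, card_univ, ZMod.card, nsmul_eq_mul]
  rw [hc]
  refine sum_le_sum fun b _ => ?_
  by_cases hb : ((M * b.val : ℕ) : ℤ) ≡ a [ZMOD q]
  · have h2 : ∀ j : ℕ, F (M * (b.val + q * j)) = (jacobiSym (M : ℤ) k : ℝ) *
        ((jacobiSym ((b.val + q * j : ℕ) : ℤ) k : ℝ) *
          Φ (((b.val + q * j : ℕ) : ℝ) / (X / M))) := by
      intro j
      simp only [hF]
      rw [if_pos]
      · have e1 : ((M * (b.val + q * j) : ℕ) : ℤ) = (M : ℤ) * ((b.val + q * j : ℕ) : ℤ) := by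
          push_cast; ring
        have e2 : ((M * (b.val + q * j) : ℕ) : ℝ) / X = ((b.val + q * j : ℕ) : ℝ) / (X / M) := by
          rw [Nat.cast_mul]; field_simp
        rw [e1, e2, jacobiSym.mul_left]
        push_cast; ring
      · refine ⟨?_, dvd_mul_right _ _⟩
        refine Int.ModEq.trans ?_ hb
        have : ((M * (b.val + q * j) : ℕ) : ℤ) = ((M * b.val : ℕ) : ℤ) + q * (M * j) := by
          push_cast; ring
        rw [this]
        exact Int.modEq_add_fac_self
    simp_rw [h2]
    rw [tsum_mul_left, abs_mul]
    have h3 := weighted hΦ hL k hk hodd hsq q b.val hq0 hq (X / M) (by positivity)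
    have h4 : |(jacobiSym (M : ℤ) k : ℝ)| ≤ 1 := by
      rcases jacobiSym.trichotomy (M : ℤ) k with h | h | h <;> rw [h] <;> simp
    calc _ ≤ 1 * B := mul_le_mul h4 h3 (abs_nonneg _) zero_le_one
      _ = B := one_mul _
  · have h2 : ∀ j : ℕ, F (M * (b.val + q * j)) = 0 := by
      intro j
      simp only [hF]
      rw [if_neg]
      rintro ⟨h, _⟩
      apply hb
      refine Int.ModEq.trans (Int.ModEq.symm ?_) h
      have : ((M * (b.val + q * j) : ℕ) : ℤ) = ((M * b.val : ℕ) : ℤ) + q * (M * j) := by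
        push_cast; ring
      rw [this]
      exact Int.modEq_add_fac_self
    simp_rw [h2]
    simpa using hB0

open ArithmeticFunction in
lemma sum_mu (b : ℕ) (_hb : 0 < b) : ∑ i ∈ b.divisors, moebius i = if b = 1 then 1 else 0 := by
  have := congrArg (fun f => f b) moebius_mul_coe_zeta
  simp only [coe_mul_zeta_apply, one_apply] at this
  exact this

open ArithmeticFunction in
lemma cop_ind (m n : ℕ) (hn : 0 < n) :
    (∑ g ∈ n.divisors, if g ∣ m then moebius g else 0) = if Nat.Coprime m n then 1 else 0 := by
  rw [← sum_filter]
  have : n.divisors.filter (fun g => g ∣ m) = (Nat.gcd m n).divisors := by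
    ext g
    have : Nat.gcd m n ≠ 0 := (Nat.gcd_pos_of_pos_right m hn).ne'
    simp only [mem_filter, Nat.mem_divisors, Nat.dvd_gcd_iff]
    constructor
    · rintro ⟨⟨h1, h2⟩, h3⟩; exact ⟨⟨h3, h1⟩, this⟩
    · rintro ⟨⟨h3, h1⟩, _⟩; exact ⟨⟨h1, hn.ne'⟩, h3⟩
  rw [this, sum_mu _ (Nat.gcd_pos_of_pos_right m hn)]

lemma sq_dvd_aux {α b c : ℕ} (hb : 0 < b) (hc : Squarefree c) : α ^ 2 ∣ b ^ 2 * c ↔ α ∣ b := by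
  constructor
  · intro h
    obtain ⟨g, α', b', hg, hcop, rfl, rfl⟩ := Nat.exists_coprime' (m := α) (n := b)
      (Nat.gcd_pos_of_pos_right _ hb)
    have h1 : α' ^ 2 ∣ b' ^ 2 * c := by
      have : g ^ 2 * α' ^ 2 ∣ g ^ 2 * (b' ^ 2 * c) := by
        convert h using 1 <;> ring
      exact Nat.dvd_of_mul_dvd_mul_left (by positivity) this
    have h2 : α' ^ 2 ∣ c := (Nat.Coprime.pow 2 2 hcop).dvd_of_dvd_mul_left h1
    have h3 : α' = 1 := by
      have := hc α' (by rwa [← sq])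
      exact Nat.isUnit_iff.mp this
    rw [h3, one_mul]; exact dvd_mul_left _ _
  · intro h
    exact (pow_dvd_pow_of_dvd h 2).mul_right c

open ArithmeticFunction in
lemma sqf_ind (m A : ℕ) (hm : 0 < m) (hA : ∀ α, α ^ 2 ∣ m → α ≤ A) :
    (∑ g ∈ Icc 1 A, if g ^ 2 ∣ m then moebius g else 0) = if Squarefree m then 1 else 0 := by
  obtain ⟨c, b, hc0, hb0, rfl, hc⟩ := Nat.sq_mul_squarefree_of_pos hm
  rw [← sum_filter]
  have : (Icc 1 A).filter (fun g => g ^ 2 ∣ b ^ 2 * c) = b.divisors := by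
    ext g
    simp only [mem_filter, mem_Icc, Nat.mem_divisors, sq_dvd_aux hb0 hc]
    constructor
    · rintro ⟨_, h⟩; exact ⟨h, hb0.ne'⟩
    · rintro ⟨h, _⟩
      exact ⟨⟨Nat.pos_of_dvd_of_pos h hb0, hA g ((sq_dvd_aux hb0 hc).mpr h)⟩, h⟩
  rw [this, sum_mu b hb0]
  congr 1
  apply propext
  constructor
  · rintro rfl; simpa using hc
  · intro h
    have := h b ⟨c, by ring⟩
    exact Nat.isUnit_iff.mp this

open ArithmeticFunction in
lemma nat_bound {Φ : ℝ → ℝ} (hΦ : Function.support Φ ⊆ Set.Icc (1 / 2) (5 / 2))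
    {L : NNReal} (hL : LipschitzWith L Φ)
    (k r : ℕ) (hk : 1 < k) (hodd : Odd k) (hsq : Squarefree k) (hr : 0 < r) (q : ℕ) (hq0 : 0 < q)
    (hq : Nat.Coprime q k) (X : ℝ) (hX : 0 < X) (v : ℕ) (hv : 0 < v) (a : ℤ) :
    |∑' m : ℕ, if Squarefree m ∧ (m : ℤ) ≡ a [ZMOD q] ∧ v ∣ m then
      (jacobiSym (m : ℤ) (r ^ 2 * k) : ℝ) * Φ ((m : ℝ) / X) else 0| ≤
      Real.sqrt (3 * X) * (r * (q * (3 * L * (Real.sqrt k * (1 + Real.log k))))) := by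
  set B := q * (3 * L * (Real.sqrt k * (1 + Real.log k))) with hB
  have hB0 : 0 ≤ B := by
    have : 0 ≤ Real.log k := Real.log_natCast_nonneg k
    positivity
  set A := ⌊Real.sqrt (3 * X)⌋₊ with hA
  set T : ℕ → ℕ → ℕ → ℝ := fun α g m =>
    if (m : ℤ) ≡ a [ZMOD q] ∧ Nat.lcm (Nat.lcm v (α ^ 2)) g ∣ m then
      (jacobiSym (m : ℤ) k : ℝ) * Φ ((m : ℝ) / X) else 0 with hT
  have hpt : ∀ m : ℕ, (if Squarefree m ∧ (m : ℤ) ≡ a [ZMOD q] ∧ v ∣ m then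
      (jacobiSym (m : ℤ) (r ^ 2 * k) : ℝ) * Φ ((m : ℝ) / X) else 0) =
      ∑ α ∈ Icc 1 A, ∑ g ∈ r.divisors, (((moebius α : ℤ) : ℝ) * ((moebius g : ℤ) : ℝ)) * T α g m := by
    intro m
    by_cases h0 : Φ ((m : ℝ) / X) = 0
    · simp [hT, h0]
    by_cases hP : (m : ℤ) ≡ a [ZMOD q] ∧ v ∣ m
    · obtain ⟨hm0, hmX⟩ := fin_supp hΦ hX h0
      have hterm : ∀ α g : ℕ, (((moebius α : ℤ) : ℝ) * ((moebius g : ℤ) : ℝ)) * T α g m =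
          (((if α ^ 2 ∣ m then moebius α else 0 : ℤ) : ℝ) *
          ((if g ∣ m then moebius g else 0 : ℤ) : ℝ)) *
            ((jacobiSym (m : ℤ) k : ℝ) * Φ ((m : ℝ) / X)) := by
        intro α g
        simp only [hT, Nat.lcm_dvd_iff, hP, true_and]
        by_cases h1 : α ^ 2 ∣ m <;> by_cases h2 : g ∣ m <;> simp [h1, h2]
      simp_rw [hterm]
      simp_rw [← sum_mul]
      simp_rw [← mul_sum]
      rw [← sum_mul, ← Int.cast_sum, ← Int.cast_sum, cop_ind m r hr, sqf_ind m A hm0]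
      · have hj : jacobiSym (m : ℤ) (r ^ 2 * k) =
            (if Nat.Coprime m r then 1 else 0) * jacobiSym (m : ℤ) k := by
          rw [jacobiSym.mul_right' _ (by positivity) (by omega), jacobiSym.pow_right]
          congr 1
          split_ifs with h
          · exact jacobiSym.sq_one (by rwa [Int.gcd_natCast_natCast])
          · have : NeZero r := ⟨hr.ne'⟩
            rw [jacobiSym.eq_zero_iff_not_coprime.mpr (by rwa [Int.gcd_natCast_natCast])]
            norm_num
        rw [hj]
        by_cases h1 : Squarefree m <;> simp [h1, hP]
      · intro α hα
        apply Nat.le_floor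
        apply Real.le_sqrt_of_sq_le
        have : α ^ 2 ≤ m := Nat.le_of_dvd hm0 hα
        have : ((α ^ 2 : ℕ) : ℝ) ≤ m := by exact_mod_cast this
        push_cast at this
        linarith
    · rw [if_neg (fun h => hP h.2)]
      symm
      apply sum_eq_zero; intro α _
      apply sum_eq_zero; intro g _
      simp only [hT]
      rw [if_neg, mul_zero]
      rintro ⟨h1, h2⟩
      rw [Nat.lcm_dvd_iff, Nat.lcm_dvd_iff] at h2
      exact hP ⟨h1, h2.1.1⟩
  have hsT : ∀ α g, Summable (fun m => (((moebius α : ℤ) : ℝ) * ((moebius g : ℤ) : ℝ)) * T α g m) :=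
    fun α g => summ hΦ hX _ (fun m hm => by simp [hT, hm])
  rw [tsum_congr hpt, Summable.tsum_finsetSum (fun α _ => summable_sum (fun g _ => hsT α g))]
  refine (abs_sum_le_sum_abs _ _).trans ?_
  have hmu : ∀ i : ℕ, |((moebius i : ℤ) : ℝ)| ≤ 1 := by
    intro i
    have := abs_moebius_le_one (n := i)
    exact_mod_cast this
  have hin : ∀ α ∈ Icc 1 A, |∑' m, ∑ g ∈ r.divisors,
      (((moebius α : ℤ) : ℝ) * ((moebius g : ℤ) : ℝ)) * T α g m| ≤ r * B := by
    intro α hα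
    rw [Summable.tsum_finsetSum (fun g _ => hsT α g)]
    refine (abs_sum_le_sum_abs _ _).trans ?_
    have : ∀ g ∈ r.divisors, |∑' m, (((moebius α : ℤ) : ℝ) * ((moebius g : ℤ) : ℝ)) * T α g m| ≤ B := by
      intro g hg
      rw [tsum_mul_left, abs_mul, abs_mul]
      have h1 := T_bound hΦ hL k hk hodd hsq q hq0 hq X hX (Nat.lcm (Nat.lcm v (α ^ 2)) g) (by
        have hα1 : 0 < α := by simp at hα; omega
        have hg1 : 0 < g := Nat.pos_of_mem_divisors hg
        exact Nat.lcm_pos (Nat.lcm_pos hv (by positivity)) hg1) a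
      calc _ ≤ 1 * 1 * B := by
            refine mul_le_mul ?_ h1 (abs_nonneg _) (by norm_num)
            exact mul_le_mul (hmu _) (hmu _) (abs_nonneg _) zero_le_one
        _ = B := by ring
    refine (sum_le_sum this).trans ?_
    rw [sum_const, nsmul_eq_mul]
    gcongr
    exact Nat.card_divisors_le_self r
  refine (sum_le_sum hin).trans ?_
  rw [sum_const, nsmul_eq_mul, Nat.card_Icc, Nat.add_sub_cancel]
  gcongr
  exact Nat.floor_le (Real.sqrt_nonneg _)

end PV

/-- Proposition 1 of Radziwiłł–Soundararajan (case `n` not a perfect square):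
the bound `O(X^{1/2+ε} √n)` for `∑_{d ∈ 𝓔(κ,a), v ∣ d} (d|n) Φ(κd/X)`. -/
theorem prop_dirichlet_poly_nonsquare (N₀ : ℕ) (hN₀ : 0 < N₀) (h8 : (8 : ℕ) ∣ N₀)
    (a : ℤ) (ha : a ≡ 1 [ZMOD 4]) (haN : Int.gcd a (N₀ : ℤ) = 1)
    (κ : ℤ) (hκ : κ = 1 ∨ κ = -1) (ε : ℝ) (hε0 : 0 < ε) (hε : ε < 1 / 2)
    (Φ : ℝ → ℝ) (hΦsmooth : ContDiff ℝ (⊤ : ℕ∞) Φ) (hΦnonneg : ∀ x, 0 ≤ Φ x)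
    (hΦsupp : Function.support Φ ⊆ Set.Icc (1 / 2) (5 / 2)) :
    ∃ C > 0, ∀ X : ℝ, 2 ≤ X → ∀ n v : ℕ, 0 < n → 0 < v →
      Nat.gcd (n * v) N₀ = 1 → Squarefree v → Nat.gcd n v = 1 →
      (v : ℝ) * Real.sqrt n ≤ X ^ ((1 : ℝ) / 2 - ε) → ¬ IsSquare n →
      |(∑' d : ℤ,
          if Squarefree d ∧ 0 < κ * d ∧ d ≡ a [ZMOD N₀] ∧ (v : ℤ) ∣ d then
            (jacobiSym d n : ℝ) * Φ (κ * d / X) else 0)| ≤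
        C * X ^ ((1 : ℝ) / 2 + ε) * Real.sqrt n := by
  have hcs : HasCompactSupport Φ :=
    HasCompactSupport.of_support_subset_isCompact isCompact_Icc hΦsupp
  obtain ⟨L, hL⟩ := ContDiff.lipschitzWith_of_hasCompactSupport hcs hΦsmooth (by simp)
  have hN₀' : (0 : ℝ) < N₀ := by exact_mod_cast hN₀
  refine ⟨2 * (N₀ * (3 * (L + 1) * (1 + 1 / ε))), by positivity, ?_⟩
  intro X hX n v hn hv hgcd _ _ hvn hns
  have hX0 : 0 < X := by linarith
  obtain ⟨k, r, hk0, hr0, hnk, hksq⟩ := Nat.sq_mul_squarefree_of_pos hn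
  have hk1 : 1 < k := by
    by_contra h
    have : k = 1 := by omega
    exact hns ⟨r, by rw [← hnk, this]; ring⟩
  have hcopn : Nat.Coprime n N₀ := Nat.Coprime.coprime_mul_right hgcd
  have hkn : k ∣ n := ⟨r ^ 2, by rw [← hnk]; ring⟩
  have hq : Nat.Coprime N₀ k := (hcopn.coprime_dvd_left hkn).symm
  have hodd : Odd k := by
    have : Nat.Coprime 8 k := hq.coprime_dvd_left h8
    have : Nat.Coprime 2 k := this.coprime_dvd_left (by norm_num)
    exact Nat.coprime_two_left.mp this
  have hκκ : κ * κ = 1 := by rcases hκ with rfl | rfl <;> norm_num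
  have hκ0 : κ ≠ 0 := by rintro rfl; simp at hκκ
  have hmain := PV.nat_bound hΦsupp hL k r hk1 hodd hksq hr0 N₀ hN₀ hq X hX0 v hv (κ * a)
  rw [hnk] at hmain
  have hinj : Function.Injective (fun m : ℕ => κ * (m : ℤ)) := by
    intro x y h
    have := mul_left_cancel₀ hκ0 h
    exact_mod_cast this
  have hts := hinj.tsum_eq (f := fun d : ℤ =>
    if Squarefree d ∧ 0 < κ * d ∧ d ≡ a [ZMOD N₀] ∧ (v : ℤ) ∣ d then
            (jacobiSym d n : ℝ) * Φ (κ * d / X) else 0) (by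
    intro d hd
    rw [Function.mem_support] at hd
    have hpos : 0 < κ * d := by
      by_contra h
      exact hd (if_neg (fun h' => h h'.2.1))
    refine ⟨(κ * d).toNat, ?_⟩
    simp only
    rw [Int.toNat_of_nonneg hpos.le, ← mul_assoc, hκκ, one_mul])
  rw [← hts]
  have hterm : ∀ m : ℕ, (if Squarefree (κ * (m : ℤ)) ∧ 0 < κ * (κ * (m : ℤ)) ∧
      κ * (m : ℤ) ≡ a [ZMOD N₀] ∧ (v : ℤ) ∣ κ * (m : ℤ) then
      (jacobiSym (κ * (m : ℤ)) n : ℝ) * Φ (κ * ((κ * (m : ℤ) : ℤ) : ℝ) / X) else 0) =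
      (jacobiSym κ n : ℝ) * (if Squarefree m ∧ (m : ℤ) ≡ κ * a [ZMOD N₀] ∧ v ∣ m then
      (jacobiSym (m : ℤ) n : ℝ) * Φ ((m : ℝ) / X) else 0) := by
    intro m
    have hu : IsUnit κ := IsUnit.of_mul_eq_one κ hκκ
    have e1 : Squarefree (κ * (m : ℤ)) ↔ Squarefree m := by
      rw [← Int.squarefree_natCast]
      exact (associated_unit_mul_left (m : ℤ) κ hu).squarefree_iff
    have e2 : (v : ℤ) ∣ κ * (m : ℤ) ↔ v ∣ m := by
      rw [hu.dvd_mul_left, Int.natCast_dvd_natCast]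
    have e3 : κ * (m : ℤ) ≡ a [ZMOD N₀] ↔ (m : ℤ) ≡ κ * a [ZMOD N₀] := by
      constructor
      · intro h
        have := h.mul_left κ
        rwa [← mul_assoc, hκκ, one_mul] at this
      · intro h
        have := h.mul_left κ
        rwa [← mul_assoc, hκκ, one_mul] at this
    have e4 : κ * (κ * (m : ℤ)) = m := by rw [← mul_assoc, hκκ, one_mul]
    have e5 : (κ : ℝ) * ((κ * (m : ℤ) : ℤ) : ℝ) = m := by exact_mod_cast e4
    have e6 : Squarefree m → 0 < (m : ℤ) := by
      intro h
      have := Nat.pos_of_ne_zero h.ne_zero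
      exact_mod_cast this
    rw [e5, jacobiSym.mul_left]
    by_cases h : Squarefree m ∧ (m : ℤ) ≡ κ * a [ZMOD N₀] ∧ v ∣ m
    · rw [if_pos h, if_pos ⟨e1.mpr h.1, e4.symm ▸ e6 h.1, e3.mpr h.2.1, e2.mpr h.2.2⟩]; push_cast; ring
    · rw [if_neg h, if_neg (fun h' => h ⟨e1.mp h'.1, e3.mp h'.2.2.1, e2.mp h'.2.2.2⟩), mul_zero]
  rw [tsum_congr hterm, tsum_mul_left, abs_mul]
  have hjk : |(jacobiSym κ n : ℝ)| ≤ 1 := by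
    rcases jacobiSym.trichotomy κ n with h | h | h <;> rw [h] <;> simp
  have hnX : (n : ℝ) ≤ X := by
    have h1 : Real.sqrt n ≤ Real.sqrt X := by
      calc Real.sqrt n ≤ v * Real.sqrt n := by
            have : (1 : ℝ) ≤ v := by exact_mod_cast hv
            nlinarith [Real.sqrt_nonneg (n : ℝ)]
        _ ≤ X ^ ((1 : ℝ) / 2 - ε) := hvn
        _ ≤ X ^ ((1 : ℝ) / 2) := Real.rpow_le_rpow_of_exponent_le (by linarith) (by linarith)
        _ = Real.sqrt X := (Real.sqrt_eq_rpow X).symm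
    exact (Real.sqrt_le_sqrt_iff hX0.le).mp h1
  have hkX : (k : ℝ) ≤ X := by
    have : k ≤ n := Nat.le_of_dvd hn hkn
    exact le_trans (by exact_mod_cast this) hnX
  have hlog : 1 + Real.log k ≤ (1 + 1 / ε) * X ^ ε := by
    have h1 : Real.log k ≤ Real.log X :=
      Real.log_le_log (by exact_mod_cast hk0) hkX
    have h2 := Real.log_le_rpow_div hX0.le hε0
    have h3 : 1 ≤ X ^ ε := Real.one_le_rpow (by linarith) hε0.le
    calc 1 + Real.log k ≤ X ^ ε + X ^ ε / ε := by linarith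
      _ = _ := by ring
  have hsqrt : (r : ℝ) * Real.sqrt k = Real.sqrt n := by
    rw [← hnk]; push_cast
    rw [Real.sqrt_mul (by positivity), Real.sqrt_sq (by positivity)]
  have h3X : Real.sqrt (3 * X) ≤ 2 * X ^ ((1 : ℝ) / 2) := by
    rw [← Real.sqrt_eq_rpow]
    apply Real.sqrt_le_iff.mpr
    refine ⟨by positivity, ?_⟩
    rw [mul_pow, Real.sq_sqrt hX0.le]; linarith
  have hL0 : (0 : ℝ) ≤ L := L.coe_nonneg
  have hlog0 : 0 ≤ 1 + Real.log k := by
    have : 0 ≤ Real.log k := Real.log_natCast_nonneg k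
    linarith
  calc _ ≤ 1 * (Real.sqrt (3 * X) *
        (r * (N₀ * (3 * L * (Real.sqrt k * (1 + Real.log k)))))) :=
        mul_le_mul hjk hmain (abs_nonneg _) zero_le_one
    _ = Real.sqrt (3 * X) * (N₀ * (3 * L * (1 + Real.log k))) * (r * Real.sqrt k) := by ring
    _ = Real.sqrt (3 * X) * (N₀ * (3 * L * (1 + Real.log k))) * Real.sqrt n := by rw [hsqrt]
    _ ≤ (2 * X ^ ((1 : ℝ) / 2)) * (N₀ * (3 * (L + 1) * ((1 + 1 / ε) * X ^ ε))) * Real.sqrt n := by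
        gcongr
        linarith
    _ = _ := by
        rw [Real.rpow_add hX0]; ring
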